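/- arXiv:2605.25346 — 6 statements merged into one kernel-verified Lean document; each statement's English description precedes it below -/
import Mathlib

section
/- Let f : ℝ^{n_i} → ℝ^{n_o}, c_g ∈ ℝ^{n_i}, A_g a real n_i×n_z matrix, Z ⊆ ℝ^{n_z}, and l_g ≤ u_g in ℝ^{n_i}. Suppose there exist a real n_o×n_z matrix W_z, a real n_o×n_i matrix W_r, and vectors b̲, b̄ ∈ ℝ^{n_o} such that for all z ∈ Z and all r with l_g ≤ r ≤ u_g, componentwise W_z z + W_r r + b̲ ≤ f(c_g + A_g z + r) ≤ W_z z + W_r r + b̄. Define L, U ∈ ℝ^{n_o} componentwise by L_j = Σ_i ((W_r)⁺_{ji} (l_g)_i + (W_r)⁻_{ji} (u_g)_i) and U_j = Σ_i ((W_r)⁺_{ji} (u_g)_i + (W_r)⁻_{ji} (l_g)_i). Then for all z ∈ Z and all r with l_g ≤ r ≤ u_g, componentwise W_z z + b̲ + L ≤ f(c_g + A_g z + r) ≤ W_z z + b̄ + U; in particular every value of f on the Taylor-model input set {c_g + A_g z + r : z ∈ Z, l_g ≤ r ≤ u_g} lies in the linear Taylor model with slope W_z and interval remainder [b̲ + L,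 b̄ + U]. -/
/-!
The slope on `z` is shared by the two affine bounds on `f`, so `Wz z` passes through unchanged and
only the term `Wr r` has to be bounded over the box `[lg, ug]`. Splitting each entry of `Wr` as
positive part plus negative part turns this into interval arithmetic on single coordinates
(`posPart_negPart_mul_bounds`), summed along each row. The element of the remainder interval
witnessing membership in the Taylor model is `f (cg + Ag z + r) - Wz z`.
-/

/-- Interval multiplication by a scalar `w` of arbitrary sign. -/
lemma posPart_negPart_mul_bounds {w l x u : ℝ} (hl : l ≤ x) (hu : x ≤ u) :
    max w 0 * l + min w 0 * u ≤ w * x ∧ w * x ≤ max w 0 * u + min w 0 * l := by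
  rcases le_total w 0 with h | h
  · simp only [max_eq_right h, min_eq_left h]
    constructor <;> nlinarith
  · simp only [max_eq_left h, min_eq_right h]
    constructor <;> nlinarith

/-- CROWN bounds of a function with linear Taylor-model input: shared-slope affine
bounds on the reparameterized input yield a linear Taylor model (slope `Wz`,
interval remainder `[bl + L, bu + U]`) soundly enclosing `f` on the TM input set. -/
theorem crown_tm_input {ni no nz : ℕ} (f : (Fin ni → ℝ) → (Fin no → ℝ))
    (cg : Fin ni → ℝ) (Ag : Matrix (Fin ni) (Fin nz) ℝ) (Z : Set (Fin nz → ℝ))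
    (lg ug : Fin ni → ℝ) (hlu : ∀ i, lg i ≤ ug i)
    (Wz : Matrix (Fin no) (Fin nz) ℝ) (Wr : Matrix (Fin no) (Fin ni) ℝ)
    (bl bu : Fin no → ℝ)
    (hb : ∀ z ∈ Z, ∀ r : Fin ni → ℝ, (∀ i, lg i ≤ r i ∧ r i ≤ ug i) → ∀ j,
      Wz.mulVec z j + Wr.mulVec r j + bl j ≤ f (cg + Ag.mulVec z + r) j ∧
      f (cg + Ag.mulVec z + r) j ≤ Wz.mulVec z j + Wr.mulVec r j + bu j) :
    ∀ z ∈ Z, ∀ r : Fin ni → ℝ, (∀ i, lg i ≤ r i ∧ r i ≤ ug i) →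
      (∀ j,
        Wz.mulVec z j + bl j + (∑ i, (max (Wr j i) 0 * lg i + min (Wr j i) 0 * ug i))
          ≤ f (cg + Ag.mulVec z + r) j ∧
        f (cg + Ag.mulVec z + r) j
          ≤ Wz.mulVec z j + bu j + (∑ i, (max (Wr j i) 0 * ug i + min (Wr j i) 0 * lg i))) ∧
      (∃ r' : Fin no → ℝ,
        (∀ j, bl j + (∑ i, (max (Wr j i) 0 * lg i + min (Wr j i) 0 * ug i)) ≤ r' j ∧
              r' j ≤ bu j + (∑ i, (max (Wr j i) 0 * ug i + min (Wr j i) 0 * lg i))) ∧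
        f (cg + Ag.mulVec z + r) = Wz.mulVec z + r') := by
  intro z hz r hr
  have hL (j) : (∑ i, (max (Wr j i) 0 * lg i + min (Wr j i) 0 * ug i)) ≤ Wr.mulVec r j := by
    simp only [Matrix.mulVec, dotProduct]
    exact Finset.sum_le_sum fun i _ => (posPart_negPart_mul_bounds (hr i).1 (hr i).2).1
  have hU (j) : Wr.mulVec r j ≤ ∑ i, (max (Wr j i) 0 * ug i + min (Wr j i) 0 * lg i) := by
    simp only [Matrix.mulVec, dotProduct]
    exact Finset.sum_le_sum fun i _ => (posPart_negPart_mul_bounds (hr i).1 (hr i).2).2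
  refine ⟨fun j => ?_, f (cg + Ag.mulVec z + r) - Wz.mulVec z, fun j => ?_,
    (add_sub_cancel _ _).symm⟩
  · obtain ⟨h₁, h₂⟩ := hb z hz r hr j
    constructor <;> linarith [hL j, hU j]
  · obtain ⟨h₁, h₂⟩ := hb z hz r hr j
    rw [Pi.sub_apply]
    constructor <;> linarith [hL j, hU j]
end

section
/- Let f : ℝⁿ → ℝⁿ be globally Lipschitz, x₀ ∈ ℝⁿ, h > 0, p : ℝ → ℝⁿ continuous on [0,h] with p(0) = x₀, and I ⊆ ℝⁿ a closed set with 0 ∈ I. Suppose the Picard operator maps the tube into itself: for every continuous g : ℝ → ℝⁿ with g(τ) − p(τ) ∈ I for all τ ∈ [0,h], one has (x₀ + ∫₀^τ f(g(s)) ds) − p(τ) ∈ I for all τ ∈ [0,h]. Then the solution x : ℝ → ℝⁿ of the initial value problem ẋ(τ) = f(x(τ)), x(0) = x₀ satisfies x(τ) − p(τ) ∈ I for all τ ∈ [0,h]. -/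
open MeasureTheory intervalIntegral

/-!
The solution is the limit of the Picard iterates started at the centre `p` of the tube. The centre
lies in the tube because `0 ∈ I`, and the invariance hypothesis keeps every iterate there. Since
the solution is a fixed point of the Picard operator and `f` is `K`-Lipschitz, the `k`-th iterate
differs from it at time `τ ∈ [0, h]` by at most `M (K τ)ᵏ / k!`
(`norm_picardIter_sub_le`), where `M` bounds `‖p - x‖` on `[0, h]`. This tends to `0`, so the
solution minus `p` is a pointwise limit of points of the closed set `I`.

The invariance hypothesis concerns functions continuous on all of `ℝ`, whereas `p` and `x` are only
controlled on `[0, h]`; the iterates are therefore frozen outside `[0, h]` with `Set.IccExtend`.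
-/

/-- The `k`-th Picard iterate for `ẋ = f(x)`, `x(0) = x₀`, started at `p`, and extended from
`[0, h]` to `ℝ` by its endpoint values. -/
noncomputable def picardIter {n : ℕ} (f : (Fin n → ℝ) → (Fin n → ℝ)) (x₀ : Fin n → ℝ)
    {h : ℝ} (hh : 0 ≤ h) (p : ℝ → Fin n → ℝ) : ℕ → ℝ → Fin n → ℝ
  | 0 => Set.IccExtend hh fun τ => p τ
  | k + 1 => Set.IccExtend hh fun τ => x₀ + ∫ s in (0 : ℝ)..τ, f (picardIter f x₀ hh p k s)

section

variable {n : ℕ} {f : (Fin n → ℝ) → (Fin n → ℝ)} {x₀ : Fin n → ℝ} {h : ℝ} {p : ℝ → Fin n → ℝ}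

lemma picardIter_zero_of_mem (hh : 0 ≤ h) {τ : ℝ} (hτ : τ ∈ Set.Icc 0 h) :
    picardIter f x₀ hh p 0 τ = p τ :=
  Set.IccExtend_of_mem hh _ hτ

lemma picardIter_succ_of_mem (hh : 0 ≤ h) (k : ℕ) {τ : ℝ} (hτ : τ ∈ Set.Icc 0 h) :
    picardIter f x₀ hh p (k + 1) τ = x₀ + ∫ s in (0 : ℝ)..τ, f (picardIter f x₀ hh p k s) :=
  Set.IccExtend_of_mem hh _ hτ

lemma continuous_picardIter (hf : Continuous f) (hh : 0 ≤ h) (hp : ContinuousOn p (Set.Icc 0 h))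
    (k : ℕ) : Continuous (picardIter f x₀ hh p k) := by
  induction k with
  | zero => exact (continuousOn_iff_continuous_domRestrict.1 hp).Icc_extend'
  | succ k ih =>
    have hc : Continuous fun τ : ℝ => ∫ s in (0 : ℝ)..τ, f (picardIter f x₀ hh p k s) :=
      continuous_primitive (fun a b => (hf.comp ih).intervalIntegrable a b) 0
    exact (continuous_const.add (hc.comp continuous_subtype_val)).Icc_extend'

/-- A solution of the initial value problem on `[0, h]` is a fixed point of the Picard operator. -/
lemma eq_add_integral_of_hasDerivAt (hf : Continuous f) {x : ℝ → Fin n → ℝ} (hx0 : x 0 = x₀)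
    (hx : ∀ τ ∈ Set.Icc 0 h, HasDerivAt x (f (x τ)) τ) {τ : ℝ} (hτ : τ ∈ Set.Icc 0 h) :
    IntervalIntegrable (fun s => f (x s)) volume 0 τ ∧
      x τ = x₀ + ∫ s in (0 : ℝ)..τ, f (x s) := by
  have hsub : Set.uIcc 0 τ ⊆ Set.Icc 0 h := by
    rw [Set.uIcc_of_le hτ.1]
    exact Set.Icc_subset_Icc_right hτ.2
  have hint : IntervalIntegrable (fun s => f (x s)) volume 0 τ :=
    ContinuousOn.intervalIntegrable fun s hs =>
      (hf.continuousAt.comp (hx s (hsub hs)).continuousAt).continuousWithinAt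
  refine ⟨hint, ?_⟩
  rw [integral_eq_sub_of_hasDerivAt (fun s hs => hx s (hsub hs)) hint, hx0]
  abel

lemma norm_picardIter_sub_le {K : NNReal} (hf : LipschitzWith K f) (hh : 0 ≤ h)
    (hp : ContinuousOn p (Set.Icc 0 h)) {x : ℝ → Fin n → ℝ} (hx0 : x 0 = x₀)
    (hx : ∀ τ ∈ Set.Icc 0 h, HasDerivAt x (f (x τ)) τ) {M : ℝ}
    (hM : ∀ τ ∈ Set.Icc 0 h, ‖p τ - x τ‖ ≤ M) (k : ℕ) :
    ∀ τ ∈ Set.Icc 0 h,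
      ‖picardIter f x₀ hh p k τ - x τ‖ ≤ M * ((K * τ) ^ k / k.factorial) := by
  induction k with
  | zero =>
    intro τ hτ
    simpa [picardIter_zero_of_mem hh hτ] using hM τ hτ
  | succ k ih =>
    intro τ hτ
    obtain ⟨hint, hfix⟩ := eq_add_integral_of_hasDerivAt hf.continuous hx0 hx hτ
    have hgint : IntervalIntegrable (fun s => f (picardIter f x₀ hh p k s)) volume 0 τ :=
      (hf.continuous.comp (continuous_picardIter hf.continuous hh hp k)).intervalIntegrable 0 τ
    have hdiff : picardIter f x₀ hh p (k + 1) τ - x τ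
        = ∫ s in (0 : ℝ)..τ, (f (picardIter f x₀ hh p k s) - f (x s)) := by
      rw [picardIter_succ_of_mem hh k hτ, hfix, integral_sub hgint hint]
      abel
    calc ‖picardIter f x₀ hh p (k + 1) τ - x τ‖
        ≤ ∫ s in (0 : ℝ)..τ, K * (M * ((K * s) ^ k / k.factorial)) := by
          rw [hdiff]
          refine norm_integral_le_of_norm_le hτ.1 (ae_of_all _ fun s hs => ?_)
            (Continuous.intervalIntegrable (by fun_prop) 0 τ)
          refine (hf.norm_sub_le _ _).trans ?_
          gcongr
          exact ih s ⟨hs.1.le, hs.2.trans hτ.2⟩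
      _ = ∫ s in (0 : ℝ)..τ, (K * (M * (K ^ k / k.factorial))) * s ^ k := by
          congr 1
          ext s
          ring
      _ = M * ((K * τ) ^ (k + 1) / (k + 1).factorial) := by
          rw [intervalIntegral.integral_const_mul, integral_pow, Nat.factorial_succ]
          push_cast
          field_simp
          simp only [zero_pow (Nat.succ_ne_zero k), sub_zero]
          ring

end

/-- Soundness core of the Taylor-model flowpipe step via Picard iteration:
if the Picard operator maps the tube `{g : ∀ τ ∈ [0,h], g τ − p τ ∈ I}` into
itself, then the true ODE solution stays in the tube. -/
theorem picard_tube_invariance {n : ℕ} (f : (Fin n → ℝ) → (Fin n → ℝ)) (K : NNReal)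
    (hf : LipschitzWith K f) (x₀ : Fin n → ℝ) (h : ℝ) (hh : 0 < h)
    (p : ℝ → Fin n → ℝ) (hp : ContinuousOn p (Set.Icc 0 h))
    (I : Set (Fin n → ℝ)) (hI : IsClosed I) (h0I : (0 : Fin n → ℝ) ∈ I)
    (hp0 : p 0 = x₀)
    (hPicard : ∀ g : ℝ → Fin n → ℝ, Continuous g →
      (∀ τ ∈ Set.Icc 0 h, g τ - p τ ∈ I) →
      ∀ τ ∈ Set.Icc 0 h, (x₀ + ∫ s in (0:ℝ)..τ, f (g s)) - p τ ∈ I)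
    (x : ℝ → Fin n → ℝ) (hx0 : x 0 = x₀)
    (hx : ∀ τ ∈ Set.Icc 0 h, HasDerivAt x (f (x τ)) τ) :
    ∀ τ ∈ Set.Icc 0 h, x τ - p τ ∈ I := by
  have hmem : ∀ k, ∀ τ ∈ Set.Icc 0 h, picardIter f x₀ hh.le p k τ - p τ ∈ I := by
    intro k
    induction k with
    | zero =>
      intro τ hτ
      simpa [picardIter_zero_of_mem hh.le hτ] using h0I
    | succ k ih =>
      intro τ hτ
      rw [picardIter_succ_of_mem hh.le k hτ]
      exact hPicard _ (continuous_picardIter hf.continuous hh.le hp k) ih τ hτ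
  have hxc : ContinuousOn x (Set.Icc 0 h) := fun s hs => (hx s hs).continuousAt.continuousWithinAt
  obtain ⟨M, hM⟩ := isCompact_Icc.exists_bound_of_continuousOn (hp.sub hxc)
  intro τ hτ
  have hbound : Filter.Tendsto (fun k : ℕ => M * ((K * τ) ^ k / k.factorial))
      Filter.atTop (nhds 0) := by
    simpa using (FloorSemiring.tendsto_pow_div_factorial_atTop (K * τ : ℝ)).const_mul M
  have hlim : Filter.Tendsto (fun k => picardIter f x₀ hh.le p k τ) Filter.atTop (nhds (x τ)) :=
    tendsto_iff_norm_sub_tendsto_zero.2 <| squeeze_zero (fun _ => norm_nonneg _)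
      (fun k => norm_picardIter_sub_le hf hh.le hp hx0 hx hM k τ hτ) hbound
  exact hI.mem_of_tendsto (hlim.sub_const (p τ)) (Filter.Eventually.of_forall fun k => hmem k τ hτ)
end

section
/- Let X be a set, f, g, p, q : X → ℝ, and real numbers a ≤ b, c ≤ d, p₁ ≤ p₂, q₁ ≤ q₂ such that for all x ∈ X: f(x) − p(x) ∈ [a,b], g(x) − q(x) ∈ [c,d], p(x) ∈ [p₁,p₂], and q(x) ∈ [q₁,q₂]. For real intervals define the product [α,β]·[γ,δ] = [min(αγ, αδ, βγ, βδ), max(αγ, αδ, βγ, βδ)] and the sum [α,β]+[γ,δ] = [α+γ, β+δ]. Then for all x ∈ X, f(x)·g(x) − p(x)·q(x) lies in the interval [p₁,p₂]·[c,d] + [q₁,q₂]·[a,b] + [a,b]·[c,d]. -/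
/-!
The identity `fg − pq = p(g − q) + q(f − p) + (f − p)(g − q)` reduces the claim to the soundness of
interval multiplication, `mul_mem_Icc_corners`. The latter holds because `u * v` is affine in each
factor separately, so its extreme values over a rectangle are attained at the corners.
-/

lemma mul_mem_Icc_endpoints {α β u : ℝ} (hu : u ∈ Set.Icc α β) (v : ℝ) :
    u * v ∈ Set.Icc (min (α * v) (β * v)) (max (α * v) (β * v)) := by
  obtain ⟨h1, h2⟩ := hu
  rcases le_total 0 v with hv | hv
  · exact ⟨min_le_of_left_le (mul_le_mul_of_nonneg_right h1 hv),
      le_max_of_le_right (mul_le_mul_of_nonneg_right h2 hv)⟩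
  · exact ⟨min_le_of_right_le (mul_le_mul_of_nonpos_right h2 hv),
      le_max_of_le_left (mul_le_mul_of_nonpos_right h1 hv)⟩

/-- Soundness of interval multiplication: a product over a rectangle is bounded by its corner
values. -/
lemma mul_mem_Icc_corners {α β γ δ u v : ℝ} (hu : u ∈ Set.Icc α β) (hv : v ∈ Set.Icc γ δ) :
    u * v ∈ Set.Icc (min (min (α * γ) (α * δ)) (min (β * γ) (β * δ)))
      (max (max (α * γ) (α * δ)) (max (β * γ) (β * δ))) := by
  have h := mul_mem_Icc_endpoints hu v
  have hα := mul_mem_Icc_endpoints hv α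
  have hβ := mul_mem_Icc_endpoints hv β
  simp only [mul_comm _ α] at hα
  simp only [mul_comm _ β] at hβ
  exact ⟨(min_le_min hα.1 hβ.1).trans h.1, h.2.trans (max_le_max hα.2 hβ.2)⟩

/-- Taylor models are closed under multiplication: from enclosures
`f − p ∈ [a,b]`, `g − q ∈ [c,d]` and range bounds `p ∈ [p₁,p₂]`, `q ∈ [q₁,q₂]`,
the product remainder `f·g − p·q` lies in
`[p₁,p₂]·[c,d] + [q₁,q₂]·[a,b] + [a,b]·[c,d]` (interval arithmetic). -/
theorem tm_mul_remainder {X : Type*} (f g p q : X → ℝ)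
    (a b c d p₁ p₂ q₁ q₂ : ℝ)
    (hab : a ≤ b) (hcd : c ≤ d) (hp12 : p₁ ≤ p₂) (hq12 : q₁ ≤ q₂)
    (hf : ∀ x, f x - p x ∈ Set.Icc a b)
    (hg : ∀ x, g x - q x ∈ Set.Icc c d)
    (hpb : ∀ x, p x ∈ Set.Icc p₁ p₂)
    (hqb : ∀ x, q x ∈ Set.Icc q₁ q₂) :
    ∀ x, f x * g x - p x * q x ∈ Set.Icc
      (min (min (p₁ * c) (p₁ * d)) (min (p₂ * c) (p₂ * d))
        + min (min (q₁ * a) (q₁ * b)) (min (q₂ * a) (q₂ * b))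
        + min (min (a * c) (a * d)) (min (b * c) (b * d)))
      (max (max (p₁ * c) (p₁ * d)) (max (p₂ * c) (p₂ * d))
        + max (max (q₁ * a) (q₁ * b)) (max (q₂ * a) (q₂ * b))
        + max (max (a * c) (a * d)) (max (b * c) (b * d))) := by
  intro x
  have h1 := mul_mem_Icc_corners (hpb x) (hg x)
  have h2 := mul_mem_Icc_corners (hqb x) (hf x)
  have h3 := mul_mem_Icc_corners (hf x) (hg x)
  have e : f x * g x - p x * q x =
      p x * (g x - q x) + q x * (f x - p x) + (f x - p x) * (g x - q x) := by ring
  rw [e]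
  exact ⟨add_le_add (add_le_add h1.1 h2.1) h3.1, add_le_add (add_le_add h1.2 h2.2) h3.2⟩
end

section
/- Let X ⊆ ℝⁿ, h : ℝⁿ → ℝᵐ, g : ℝᵐ → ℝᵖ, real matrices L₁, U₁ of size m×n and L₂, U₂ of size p×m, and vectors b̲₁, b̄₁ ∈ ℝᵐ, b̲₂, b̄₂ ∈ ℝᵖ. Suppose for all x ∈ X, componentwise L₁x + b̲₁ ≤ h(x) ≤ U₁x + b̄₁ and L₂·h(x) + b̲₂ ≤ g(h(x)) ≤ U₂·h(x) + b̄₂. Then for all x ∈ X, componentwise (L₂⁺L₁ + L₂⁻U₁)x + (L₂⁺b̲₁ + L₂⁻b̄₁ + b̲₂) ≤ g(h(x)) ≤ (U₂⁺U₁ + U₂⁻L₁)x + (U₂⁺b̄₁ + U₂⁻b̲₁ + b̄₂), where M⁺ and M⁻ denote the entrywise positive and negative parts of a matrix M and matrix–matrix and matrix–vector products are the usual ones. -/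
/-! Splitting `M = M⁺ + M⁻` with `M⁺ ≥ 0 ≥ M⁻`, an interval `l ≤ y ≤ u` gives
`M⁺ l + M⁻ u ≤ M y ≤ M⁺ u + M⁻ l`. Applying this to `y = h x`, with `l` and `u` the affine
bounds on `h x`, and expanding by linearity turns the bounds on `g (h x)` into bounds
affine in `x`. -/

/-- Entrywise positive part of a matrix. -/
def mpos {m n : ℕ} (M : Matrix (Fin m) (Fin n) ℝ) : Matrix (Fin m) (Fin n) ℝ :=
  Matrix.of fun j i => max (M j i) 0

/-- Entrywise negative part of a matrix. -/
def mneg {m n : ℕ} (M : Matrix (Fin m) (Fin n) ℝ) : Matrix (Fin m) (Fin n) ℝ :=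
  Matrix.of fun j i => min (M j i) 0

theorem mpos_mulVec_add_mneg_mulVec_le {p m : ℕ} (M : Matrix (Fin p) (Fin m) ℝ)
    {l u y : Fin m → ℝ} (hl : ∀ i, l i ≤ y i) (hu : ∀ i, y i ≤ u i) (j : Fin p) :
    (mpos M).mulVec l j + (mneg M).mulVec u j ≤ M.mulVec y j := by
  simp only [Matrix.mulVec, dotProduct, mpos, mneg, Matrix.of_apply, ← Finset.sum_add_distrib]
  refine Finset.sum_le_sum fun i _ => ?_
  have h₁ := mul_le_mul_of_nonneg_left (hl i) (le_max_right (M j i) 0)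
  have h₂ := mul_le_mul_of_nonpos_left (hu i) (min_le_right (M j i) 0)
  have h₃ : max (M j i) 0 * y i + min (M j i) 0 * y i = M j i * y i := by
    rw [← add_mul, max_add_min, add_zero]
  linarith

theorem mulVec_le_mpos_mulVec_add_mneg_mulVec {p m : ℕ} (M : Matrix (Fin p) (Fin m) ℝ)
    {l u y : Fin m → ℝ} (hl : ∀ i, l i ≤ y i) (hu : ∀ i, y i ≤ u i) (j : Fin p) :
    M.mulVec y j ≤ (mpos M).mulVec u j + (mneg M).mulVec l j := by
  -- The lower bound for the reflected interval `-u ≤ -y ≤ -l`.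
  have key := mpos_mulVec_add_mneg_mulVec_le M (l := -u) (u := -l) (y := -y)
    (fun i => neg_le_neg (hu i)) (fun i => neg_le_neg (hl i)) j
  simp only [Matrix.mulVec_neg, Pi.neg_apply] at key
  linarith

/-- CROWN backward substitution: affine bounds on an outer function composed with
affine bounds on an inner function yield explicit affine bounds on the composition. -/
theorem crown_backward_substitution {n m p : ℕ} (X : Set (Fin n → ℝ))
    (h : (Fin n → ℝ) → (Fin m → ℝ)) (g : (Fin m → ℝ) → (Fin p → ℝ))
    (L₁ U₁ : Matrix (Fin m) (Fin n) ℝ) (L₂ U₂ : Matrix (Fin p) (Fin m) ℝ)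
    (bl₁ bu₁ : Fin m → ℝ) (bl₂ bu₂ : Fin p → ℝ)
    (h1 : ∀ x ∈ X, ∀ j, L₁.mulVec x j + bl₁ j ≤ h x j ∧ h x j ≤ U₁.mulVec x j + bu₁ j)
    (h2 : ∀ x ∈ X, ∀ j, L₂.mulVec (h x) j + bl₂ j ≤ g (h x) j ∧
          g (h x) j ≤ U₂.mulVec (h x) j + bu₂ j) :
    ∀ x ∈ X, ∀ j,
      (mpos L₂ * L₁ + mneg L₂ * U₁).mulVec x j
          + ((mpos L₂).mulVec bl₁ j + (mneg L₂).mulVec bu₁ j + bl₂ j)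
        ≤ g (h x) j ∧
      g (h x) j
        ≤ (mpos U₂ * U₁ + mneg U₂ * L₁).mulVec x j
          + ((mpos U₂).mulVec bu₁ j + (mneg U₂).mulVec bl₁ j + bu₂ j) := by
  intro x hx j
  have hl : ∀ i, (L₁.mulVec x + bl₁) i ≤ h x i := fun i => (h1 x hx i).1
  have hu : ∀ i, h x i ≤ (U₁.mulVec x + bu₁) i := fun i => (h1 x hx i).2
  have lower := mpos_mulVec_add_mneg_mulVec_le L₂ hl hu j
  have upper := mulVec_le_mpos_mulVec_add_mneg_mulVec U₂ hl hu j
  obtain ⟨hg₁, hg₂⟩ := h2 x hx j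
  simp only [Matrix.mulVec_add, Matrix.add_mulVec, Matrix.mulVec_mulVec, Pi.add_apply]
    at lower upper ⊢
  constructor <;> linarith
end

section
/- Let f : ℝⁿ → ℝᵐ, l ≤ u in ℝⁿ, real m×n matrices L and U, and b̲, b̄ ∈ ℝᵐ such that for all x with l ≤ x ≤ u, componentwise L x + b̲ ≤ f(x) ≤ U x + b̄. Let D = U − L and define b̄′ ∈ ℝᵐ componentwise by b̄′_j = b̄_j + Σ_i (D⁺_{ji} u_i + D⁻_{ji} l_i). Then for all x with l ≤ x ≤ u, componentwise L x + b̲ ≤ f(x) ≤ L x + b̄′; i.e., the two-sided affine bounds can be converted into bounds with a shared slope matrix L at the cost of an explicitly computable enlargement of the upper offset. -/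
/-!
Since `U x = L x + (U - L) x`, it suffices to bound `(U - L) x` on the box. Each coordinate of it
is a sum of one-variable linear functions `d * x i`, and the maximum of such a function over
`[l i, u i]` is at most `d⁺ * u i + d⁻ * l i` (`mul_le_posPart_mul_add_negPart_mul`).
-/

/-- Over an interval `[l, u]`, the linear function `t ↦ d * t` is bounded above by
`d⁺ * u + d⁻ * l`: a nonnegative slope is maximized at `u`, a nonpositive one at `l`. -/
lemma mul_le_posPart_mul_add_negPart_mul (d l u t : ℝ) (hl : l ≤ t) (hu : t ≤ u) :
    d * t ≤ max d 0 * u + min d 0 * l := by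
  rcases le_total 0 d with h | h
  · rw [max_eq_left h, min_eq_right h]
    linarith [mul_le_mul_of_nonneg_left hu h]
  · rw [max_eq_right h, min_eq_left h]
    linarith [mul_le_mul_of_nonpos_left hl h]

/-- Conversion of two-sided affine bounds into shared-slope affine bounds: the
upper bound with slope `U` can be replaced by one with slope `L` at the cost of
an explicitly computable enlargement of the upper offset. -/
theorem shared_slope_conversion {n m : ℕ} (f : (Fin n → ℝ) → (Fin m → ℝ))
    (l u : Fin n → ℝ) (hlu : ∀ i, l i ≤ u i)
    (L U : Matrix (Fin m) (Fin n) ℝ) (bl bu : Fin m → ℝ)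
    (hb : ∀ x : Fin n → ℝ, (∀ i, l i ≤ x i ∧ x i ≤ u i) → ∀ j,
      L.mulVec x j + bl j ≤ f x j ∧ f x j ≤ U.mulVec x j + bu j) :
    ∀ x : Fin n → ℝ, (∀ i, l i ≤ x i ∧ x i ≤ u i) → ∀ j,
      L.mulVec x j + bl j ≤ f x j ∧
      f x j ≤ L.mulVec x j +
        (bu j + ∑ i, (max ((U - L) j i) 0 * u i + min ((U - L) j i) 0 * l i)) := by
  intro x hx j
  refine ⟨(hb x hx j).1, (hb x hx j).2.trans ?_⟩
  -- Write `U x = L x + (U - L) x` and bound the second term coordinate by coordinate.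
  have hD : U.mulVec x j = L.mulVec x j + ∑ i, (U - L) j i * x i := by
    simp only [Matrix.mulVec, dotProduct, Matrix.sub_apply, ← Finset.sum_add_distrib]
    exact Finset.sum_congr rfl fun i _ => by ring
  have hS : ∑ i, (U - L) j i * x i ≤
      ∑ i, (max ((U - L) j i) 0 * u i + min ((U - L) j i) 0 * l i) :=
    Finset.sum_le_sum fun i _ =>
      mul_le_posPart_mul_add_negPart_mul _ _ _ _ (hx i).1 (hx i).2
  linarith
end

section
/- Let Z ⊆ ℝ^{n_z}, c ∈ ℝⁿ, A a real n×n_z matrix, l ≤ u in ℝⁿ, and let S = {c + A z + r : z ∈ Z, l ≤ r ≤ u}. Let f : ℝⁿ → ℝⁿ, W a real n×n matrix, and b̲, b̄ ∈ ℝⁿ satisfy, componentwise, W x + b̲ ≤ f(x) ≤ W x + b̄ for all x ∈ S. Then for every z ∈ Z and every r with l ≤ r ≤ u, there exists r′ with b̲ + W⁺l + W⁻u ≤ r′ ≤ b̄ + W⁺u + W⁻l such that f(c + A z + r) = W c + (W A) z + r′. In particular f(S) is contained in the linear Taylor-model set with center W c, slope W A, and interval remainder [b̲ + W⁺l + W⁻u,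 b̄ + W⁺u + W⁻l], with the same parameter z (affine dependencies are preserved). -/
/-! The affine part of the bounds splits as `W (c + A z + r) = W c + (W A) z + W r`, so the new
remainder must be `r' = f x - W c - (W A) z`, which lies between `W r + bl` and `W r + bu`.
Interval arithmetic applied to each entry of `W r` then gives the claimed box: writing a
coefficient as the sum of its positive and negative parts, each part is monotone or antitone. -/

/-- Tight interval enclosure of `w * x` for `x ∈ [a, b]`, in terms of the positive and negative
parts of `w`. -/
theorem mul_mem_interval {w a b x : ℝ} (ha : a ≤ x) (hb : x ≤ b) :
    max w 0 * a + min w 0 * b ≤ w * x ∧ w * x ≤ max w 0 * b + min w 0 * a := by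
  rcases le_total 0 w with h | h
  · rw [max_eq_left h, min_eq_right h]
    constructor <;> nlinarith
  · rw [max_eq_right h, min_eq_left h]
    constructor <;> nlinarith

/-- Single-step wrapping-free propagation of a linear Taylor model through a
function admitting shared-slope affine bounds on the TM set: the image is again
a linear Taylor model with the same parameter `z` (affine dependencies preserved). -/
theorem tm_crown_step {n nz : ℕ} (Z : Set (Fin nz → ℝ)) (c : Fin n → ℝ)
    (A : Matrix (Fin n) (Fin nz) ℝ) (l u : Fin n → ℝ) (hlu : ∀ i, l i ≤ u i)
    (f : (Fin n → ℝ) → (Fin n → ℝ)) (W : Matrix (Fin n) (Fin n) ℝ)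
    (bl bu : Fin n → ℝ)
    (hb : ∀ z ∈ Z, ∀ r : Fin n → ℝ, (∀ i, l i ≤ r i ∧ r i ≤ u i) → ∀ j,
      W.mulVec (c + A.mulVec z + r) j + bl j ≤ f (c + A.mulVec z + r) j ∧
      f (c + A.mulVec z + r) j ≤ W.mulVec (c + A.mulVec z + r) j + bu j) :
    ∀ z ∈ Z, ∀ r : Fin n → ℝ, (∀ i, l i ≤ r i ∧ r i ≤ u i) →
    ∃ r' : Fin n → ℝ,
      (∀ j, bl j + (∑ i, (max (W j i) 0 * l i + min (W j i) 0 * u i)) ≤ r' j ∧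
            r' j ≤ bu j + (∑ i, (max (W j i) 0 * u i + min (W j i) 0 * l i))) ∧
      f (c + A.mulVec z + r) = W.mulVec c + (W * A).mulVec z + r' := by
  intro z hz r hr
  have hsplit : W.mulVec (c + A.mulVec z + r)
      = W.mulVec c + (W * A).mulVec z + W.mulVec r := by
    rw [Matrix.mulVec_add, Matrix.mulVec_add, Matrix.mulVec_mulVec]
  refine ⟨f (c + A.mulVec z + r) - (W.mulVec c + (W * A).mulVec z), fun j => ?_, by abel⟩
  have hmul : W.mulVec r j = ∑ i, W j i * r i := rfl
  have hlow : ∑ i, (max (W j i) 0 * l i + min (W j i) 0 * u i) ≤ ∑ i, W j i * r i :=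
    Finset.sum_le_sum fun i _ => (mul_mem_interval (hr i).1 (hr i).2).1
  have hupp : ∑ i, W j i * r i ≤ ∑ i, (max (W j i) 0 * u i + min (W j i) 0 * l i) :=
    Finset.sum_le_sum fun i _ => (mul_mem_interval (hr i).1 (hr i).2).2
  have hj := hb z hz r hr j
  rw [hsplit] at hj
  simp only [Pi.add_apply, Pi.sub_apply, hmul] at hj ⊢
  constructor <;> linarith [hj.1, hj.2]
end
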